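/- Let e1, e2 ∈ E with e1·e2 = 0. Then there are exactly 12 roots e ∈ E with e·e1 = 1 and e·e2 = 1. Moreover, these 12 roots together with e1 and e2 form the 14 roots of an element of C, and this is the unique element of C one of whose seven pairs is {e1,e2} or which contains both e1 and e2 among its roots. -/

import Mathlib

noncomputable section

/-- The standard dot product on ℝ^8. -/
def dot (a b : Fin 8 → ℝ) : ℝ := ∑ i, a i * b i

/-- Membership in the E8 lattice Λ: all coordinates are integers or all lie in ℤ + 1/2,
and the coordinates sum to an even integer. -/
def inLambda (a : Fin 8 → ℝ) : Prop :=
  ((∀ i, ∃ n : ℤ, a i = n) ∨ (∀ i, ∃ n : ℤ, a i = n + 1 / 2)) ∧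
    ∃ n : ℤ, (∑ i, a i) = 2 * n

/-- The E8 root system E: lattice vectors of squared norm 2. -/
def isRoot (a : Fin 8 → ℝ) : Prop := inLambda a ∧ dot a a = 2

/-- The Weyl group W: linear isometries of ℝ^8 mapping the root system E onto itself. -/
def IsWeyl (w : (Fin 8 → ℝ) ≃ₗ[ℝ] (Fin 8 → ℝ)) : Prop :=
  (∀ a b : Fin 8 → ℝ, dot (w a) (w b) = dot a b) ∧
    (⇑w '' {a | isRoot a} = {a | isRoot a})

/-- An element of the set `C`: a family of seven unordered pairs of roots
`{{e₁,f₁},…,{e₇,f₇}}` with `eᵢ·fᵢ = 0` for each `i`, and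
`eᵢ·eⱼ = eᵢ·fⱼ = fᵢ·fⱼ = 1` for all `i ≠ j` (the vertex set of a 7-crosspolytope
facet of the E8 root polytope). -/
def IsCross (P : Set (Set (Fin 8 → ℝ))) : Prop :=
  ∃ e f : Fin 7 → (Fin 8 → ℝ),
    P = Set.range (fun i => ({e i, f i} : Set (Fin 8 → ℝ))) ∧
    (∀ i, isRoot (e i) ∧ isRoot (f i)) ∧
    (∀ i, dot (e i) (f i) = 0) ∧
    (∀ i j, i ≠ j →
      dot (e i) (e j) = 1 ∧ dot (e i) (f j) = 1 ∧ dot (f i) (f j) = 1)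

/-!
The sum `v = e1 + e2` is a lattice vector of squared norm 4, and the roots `x` with `x·v = 2` are
`e1`, `e2` and the roots `e` with `e·e1 = e·e2 = 1`. Reflections in roots carry every lattice vector
of squared norm 4 to some `2 εᵢ` up to sign, where `εᵢ` are the standard basis vectors, and for
`v = 2 εᵢ` the roots `εᵢ ± εⱼ` are visibly the vertices of a 7-crosspolytope whose opposite pairs
`{x, v - x}` sum to `v`. There are no further roots `y` with `y·v = 2`: taking one root `xᵢ` from
each of the seven pairs, `2 y - v` would be orthogonal to the orthogonal basis `v, 2 xᵢ - v` of ℝ^8.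
Conversely, in any element of `C` all pairs have the same sum `v`, which is `e1 + e2` as soon as
`e1` and `e2` occur in it.
-/

section Dot

variable {a b : Fin 8 → ℝ}

theorem dot_eq_dotProduct (a b : Fin 8 → ℝ) : dot a b = a ⬝ᵥ b := rfl

theorem dot_comm (a b : Fin 8 → ℝ) : dot a b = dot b a := dotProduct_comm a b

theorem dot_add (a b c : Fin 8 → ℝ) : dot a (b + c) = dot a b + dot a c := dotProduct_add a b c

theorem add_dot (a b c : Fin 8 → ℝ) : dot (a + b) c = dot a c + dot b c := add_dotProduct a b c

theorem dot_sub (a b c : Fin 8 → ℝ) : dot a (b - c) = dot a b - dot a c := dotProduct_sub a b c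

theorem sub_dot (a b c : Fin 8 → ℝ) : dot (a - b) c = dot a c - dot b c := sub_dotProduct a b c

theorem dot_smul (t : ℝ) (a b : Fin 8 → ℝ) : dot a (t • b) = t * dot a b := dotProduct_smul t a b

theorem smul_dot (t : ℝ) (a b : Fin 8 → ℝ) : dot (t • a) b = t * dot a b := smul_dotProduct t a b

theorem dot_single (a : Fin 8 → ℝ) (i : Fin 8) (t : ℝ) : dot a (Pi.single i t) = a i * t :=
  dotProduct_single a t i

theorem dot_self_nonneg (a : Fin 8 → ℝ) : 0 ≤ dot a a := dotProduct_self_star_nonneg a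

theorem dot_sub_self (a b : Fin 8 → ℝ) :
    dot (a - b) (a - b) = dot a a - 2 * dot a b + dot b b := by
  simp only [dot_sub, sub_dot, dot_comm b a]
  ring

theorem eq_of_dot_self_eq_dot (ha : dot a a = dot a b) (hb : dot b b = dot a b) : a = b := by
  refine sub_eq_zero.1 (dotProduct_self_eq_zero.1 ?_)
  rw [← dot_eq_dotProduct, dot_sub_self]
  linarith

theorem eq_zero_of_forall_orthogonal_dotProduct_eq_zero {n ι : Type*} [Fintype n] [Fintype ι]
    (hcard : Fintype.card ι = Fintype.card n) {b : ι → n → ℝ} (hb : ∀ i, b i ≠ 0)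
    (horth : Pairwise fun i j => b i ⬝ᵥ b j = 0) {z : n → ℝ} (hz : ∀ i, z ⬝ᵥ b i = 0) :
    z = 0 := by
  have hli : LinearIndependent ℝ b :=
    LinearMap.linearIndependent_of_isOrthoᵢ (B := dotProductBilin ℝ ℝ)
      (LinearMap.isOrthoᵢ_def.2 fun _ _ hij => horth hij)
      fun i => mt dotProduct_self_eq_zero.1 (hb i)
  have hspan := hli.span_eq_top_of_card_eq_finrank' (by simpa using hcard)
  have hle : Submodule.span ℝ (Set.range b) ≤ LinearMap.ker (dotProductBilin ℝ ℝ z) :=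
    Submodule.span_le.2 (Set.range_subset_iff.2 hz)
  exact dotProduct_eq_zero z fun w => hle (hspan ▸ Submodule.mem_top)

end Dot

section Lattice

variable {a b : Fin 8 → ℝ}

theorem inLambda_iff : inLambda a ↔
    ∃ (m : Fin 8 → ℤ) (k : ℤ), Even (∑ i, m i) ∧ ∀ i, a i = m i + k / 2 := by
  have sum_eq {m : Fin 8 → ℤ} {k : ℤ} (ha : ∀ i, a i = m i + k / 2) :
      ∑ i, a i = ((∑ i, m i + 4 * k : ℤ) : ℝ) := by
    simp only [ha, Finset.sum_add_distrib, Finset.sum_const, Finset.card_univ, Fintype.card_fin]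
    push_cast
    ring
  constructor
  · rintro ⟨hint | hhalf, n, hn⟩
    · choose m hm using hint
      have ha : ∀ i, a i = m i + (0 : ℤ) / 2 := by simpa using hm
      have : ∑ i, m i + 4 * 0 = 2 * n := by exact_mod_cast (sum_eq ha).symm.trans hn
      exact ⟨m, 0, ⟨n, by lia⟩, ha⟩
    · choose m hm using hhalf
      have ha : ∀ i, a i = m i + (1 : ℤ) / 2 := by simpa using hm
      have : ∑ i, m i + 4 * 1 = 2 * n := by exact_mod_cast (sum_eq ha).symm.trans hn
      exact ⟨m, 1, ⟨n - 2, by lia⟩, ha⟩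
  · rintro ⟨m, k, ⟨n, hn⟩, ha⟩
    refine ⟨?_, n + 2 * k, by rw [sum_eq ha, hn]; push_cast; ring⟩
    obtain ⟨l, rfl | rfl⟩ := Int.even_or_odd' k
    · exact Or.inl fun i => ⟨m i + l, by rw [ha]; push_cast; ring⟩
    · exact Or.inr fun i => ⟨m i + l, by rw [ha]; push_cast; ring⟩

/-- The lattice Λ as an additive subgroup of ℝ^8. -/
def e8Lattice : AddSubgroup (Fin 8 → ℝ) where
  carrier := {a | inLambda a}
  zero_mem' := inLambda_iff.2 ⟨0, 0, by simp, by simp⟩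
  add_mem' {a b} ha hb := by
    obtain ⟨m, k, hm, ha⟩ := inLambda_iff.1 ha
    obtain ⟨n, l, hn, hb⟩ := inLambda_iff.1 hb
    refine inLambda_iff.2 ⟨m + n, k + l, ?_, fun i => ?_⟩
    · simpa only [Pi.add_apply, Finset.sum_add_distrib] using hm.add hn
    · simp only [Pi.add_apply, ha, hb]
      push_cast
      ring
  neg_mem' {a} ha := by
    obtain ⟨m, k, hm, ha⟩ := inLambda_iff.1 ha
    refine inLambda_iff.2 ⟨-m, -k, ?_, fun i => ?_⟩
    · simpa only [Pi.neg_apply, Finset.sum_neg_distrib] using hm.neg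
    · simp only [Pi.neg_apply, ha]
      push_cast
      ring

theorem inLambda.add (ha : inLambda a) (hb : inLambda b) : inLambda (a + b) :=
  e8Lattice.add_mem ha hb

theorem inLambda.neg (ha : inLambda a) : inLambda (-a) :=
  e8Lattice.neg_mem ha

theorem inLambda.sub (ha : inLambda a) (hb : inLambda b) : inLambda (a - b) :=
  e8Lattice.sub_mem ha hb

theorem inLambda.intCast_smul (n : ℤ) (ha : inLambda a) : inLambda ((n : ℝ) • a) := by
  rw [Int.cast_smul_eq_zsmul]
  exact e8Lattice.zsmul_mem ha n

theorem inLambda.exists_dot_eq_intCast (ha : inLambda a) (hb : inLambda b) :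
    ∃ n : ℤ, dot a b = n := by
  obtain ⟨m, k, ⟨p, hp⟩, ha⟩ := inLambda_iff.1 ha
  obtain ⟨n, l, ⟨q, hq⟩, hb⟩ := inLambda_iff.1 hb
  have hp' : ∑ i, (m i : ℝ) = p + p := by exact_mod_cast hp
  have hq' : ∑ i, (n i : ℝ) = q + q := by exact_mod_cast hq
  refine ⟨∑ i, m i * n i + l * p + k * q + 2 * k * l, ?_⟩
  calc dot a b = ∑ i, (m i * n i + l / 2 * m i + k / 2 * n i + k * l / 4 : ℝ) :=
        Finset.sum_congr rfl fun i _ => by rw [ha, hb]; ring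
    _ = ∑ i, (m i * n i : ℝ) + l / 2 * ∑ i, (m i : ℝ) + k / 2 * ∑ i, (n i : ℝ) + 2 * k * l := by
        simp only [Finset.sum_add_distrib, ← Finset.mul_sum, Finset.sum_const, Finset.card_univ,
          Fintype.card_fin]
        ring
    _ = _ := by rw [hp', hq']; push_cast; ring

theorem inLambda.exists_two_mul_apply_eq_intCast (ha : inLambda a) (i : Fin 8) :
    ∃ n : ℤ, 2 * a i = n := by
  obtain ⟨m, k, -, ha⟩ := inLambda_iff.1 ha
  exact ⟨2 * m i + k, by rw [ha]; push_cast; ring⟩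

theorem inLambda_single_two (i : Fin 8) : inLambda (Pi.single i 2) :=
  inLambda_iff.2 ⟨Pi.single i 2, 0, by simp, fun j => by simp [Pi.single_apply]⟩

theorem inLambda_single_add_single (i j : Fin 8) :
    inLambda (Pi.single i 1 + Pi.single j 1) :=
  inLambda_iff.2 ⟨Pi.single i 1 + Pi.single j 1, 0, by simp [Finset.sum_add_distrib],
    fun l => by simp [Pi.single_apply]⟩

end Lattice

section Root

variable {r u v x y : Fin 8 → ℝ}

theorem isRoot_single_add_single {i j : Fin 8} (hij : i ≠ j) :
    isRoot (Pi.single i 1 + Pi.single j 1) := by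
  refine ⟨inLambda_single_add_single i j, ?_⟩
  rw [dot_add, dot_single, dot_single]
  norm_num [hij, hij.symm]

theorem isRoot.eq_of_dot_eq_two (hx : isRoot x) (hy : isRoot y) (h : dot x y = 2) : x = y :=
  eq_of_dot_self_eq_dot (hx.2.trans h.symm) (hy.2.trans h.symm)

theorem isRoot.dot_le_one (hx : isRoot x) (hy : isRoot y) (hxy : x ≠ y) : dot x y ≤ 1 := by
  obtain ⟨n, hn⟩ := hx.1.exists_dot_eq_intCast hy.1
  have hle : dot x y ≤ 2 := by
    have := dot_self_nonneg (x - y)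
    rw [dot_sub_self, hx.2, hy.2] at this
    linarith
  have hlt : (n : ℝ) < 2 := hn ▸ lt_of_le_of_ne hle (mt (hx.eq_of_dot_eq_two hy) hxy)
  rw [hn]
  exact_mod_cast Int.lt_add_one_iff.1 (by exact_mod_cast hlt : n < 1 + 1)

theorem IsWeyl.map_root {w : (Fin 8 → ℝ) ≃ₗ[ℝ] (Fin 8 → ℝ)} (hw : IsWeyl w) (hx : isRoot x) :
    isRoot (w x) :=
  hw.2.subset (Set.mem_image_of_mem w hx)

theorem IsWeyl.trans {w w' : (Fin 8 → ℝ) ≃ₗ[ℝ] (Fin 8 → ℝ)} (hw : IsWeyl w) (hw' : IsWeyl w') :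
    IsWeyl (w.trans w') :=
  ⟨fun a b => (hw'.1 _ _).trans (hw.1 a b), by
    rw [show ⇑(w.trans w') = w' ∘ w from rfl, Set.image_comp, hw.2, hw'.2]⟩

theorem isWeyl_of_involutive {w : (Fin 8 → ℝ) ≃ₗ[ℝ] (Fin 8 → ℝ)} (hinv : Function.Involutive w)
    (hdot : ∀ a b, dot (w a) (w b) = dot a b) (hlattice : ∀ a, inLambda a → inLambda (w a)) :
    IsWeyl w := by
  have hroot {a} (ha : isRoot a) : isRoot (w a) := ⟨hlattice a ha.1, (hdot a a).trans ha.2⟩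
  exact ⟨hdot, Set.Subset.antisymm (Set.image_subset_iff.2 fun _ => hroot)
    fun a ha => ⟨w a, hroot ha, hinv a⟩⟩

theorem isWeyl_neg : IsWeyl (LinearEquiv.neg ℝ) :=
  isWeyl_of_involutive neg_neg neg_dotProduct_neg fun _ => inLambda.neg

/-- The reflection `a ↦ a - (r·a) r` in a root `r`; no division is needed because `r·r = 2`. -/
def isRoot.reflection (hr : isRoot r) : (Fin 8 → ℝ) ≃ₗ[ℝ] (Fin 8 → ℝ) :=
  Module.reflection (x := r) (f := dotProductEquiv ℝ (Fin 8) r) hr.2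

theorem isRoot.reflection_apply (hr : isRoot r) (a : Fin 8 → ℝ) :
    hr.reflection a = a - dot r a • r :=
  Module.reflection_apply a _

theorem isRoot.isWeyl_reflection (hr : isRoot r) : IsWeyl hr.reflection := by
  refine isWeyl_of_involutive (Module.involutive_reflection _) (fun a b => ?_) fun a ha => ?_
  · simp only [hr.reflection_apply, dot_sub, sub_dot, dot_smul, smul_dot, hr.2, dot_comm a r]
    ring
  · obtain ⟨n, hn⟩ := hr.1.exists_dot_eq_intCast ha
    rw [hr.reflection_apply, hn]
    exact ha.sub (hr.1.intCast_smul n)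

theorem isRoot.reflection_sub_apply (hr : isRoot (u - v)) (huv : dot u u = dot v v) :
    hr.reflection u = v := by
  have hdot : dot (u - v) u = 1 := by
    have h2 := hr.2
    rw [dot_sub_self] at h2
    rw [sub_dot, dot_comm v u]
    linarith
  rw [hr.reflection_apply, hdot, one_smul, sub_sub_cancel]

end Root

section NormFour

variable {u v x y : Fin 8 → ℝ}

/-- The lattice vectors `v` of squared norm 4: the sums of two orthogonal roots, each of which
exposes the 7-crosspolytope facet `{x | x·v = 2}` of the root polytope. -/
def IsNormFour (v : Fin 8 → ℝ) : Prop := inLambda v ∧ dot v v = 4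

theorem isRoot.isNormFour_add (hx : isRoot x) (hy : isRoot y) (hxy : dot x y = 0) :
    IsNormFour (x + y) := by
  refine ⟨hx.1.add hy.1, ?_⟩
  rw [dot_add, add_dot, add_dot, dot_comm y x, hx.2, hy.2, hxy]
  norm_num

theorem isNormFour_single_two (i : Fin 8) : IsNormFour (Pi.single i 2) := by
  refine ⟨inLambda_single_two i, ?_⟩
  rw [dot_single, Pi.single_eq_same]
  norm_num

theorem IsNormFour.neg (hv : IsNormFour v) : IsNormFour (-v) :=
  ⟨hv.1.neg, (neg_dotProduct_neg v v).trans hv.2⟩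

theorem IsNormFour.exists_one_le_abs_apply (hv : IsNormFour v) : ∃ i, 1 ≤ |v i| := by
  by_contra! hlt
  have hsq (i) : v i * v i ≤ 1 / 4 := by
    obtain ⟨n, hn⟩ := hv.1.exists_two_mul_apply_eq_intCast i
    have hn_lt : |(n : ℝ)| < 2 := by
      rw [← hn, abs_mul, abs_two]
      linarith [hlt i]
    have hn_le : |n| ≤ 1 := Int.lt_add_one_iff.1 (by exact_mod_cast hn_lt)
    have hn_sq : (n : ℝ) ^ 2 ≤ 1 := by exact_mod_cast (sq_le_one_iff_abs_le_one n).2 hn_le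
    rw [← hn] at hn_sq
    linarith
  have hsum : dot v v ≤ ∑ _i : Fin 8, (1 / 4 : ℝ) := Finset.sum_le_sum fun i _ => hsq i
  rw [hv.2] at hsum
  norm_num at hsum

theorem IsNormFour.exists_isWeyl_of_dot_eq_three (hu : IsNormFour u) (hv : IsNormFour v)
    (huv : dot u v = 3) : ∃ w, IsWeyl w ∧ w u = v := by
  have hr : isRoot (u - v) := by
    refine ⟨hu.1.sub hv.1, ?_⟩
    rw [dot_sub_self, hu.2, hv.2, huv]
    norm_num
  exact ⟨hr.reflection, hr.isWeyl_reflection, hr.reflection_sub_apply (hu.2.trans hv.2.symm)⟩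

-- The entry `c` at a zero `k` of `m` is free, and it decides the parity of `∑ j, t j`.
theorem exists_odd_sum_sign {ι : Type*} [Fintype ι] {m : ι → ℤ} (hm : ∀ j, |m j| ≤ 1) {k : ι}
    (hk : m k = 0) :
    ∃ t : ι → ℤ, Odd (∑ j, t j) ∧
      ∀ j, (2 * t j + 1) * (2 * t j + 1) = 1 ∧ (2 * t j + 1) * m j = m j * m j := by
  classical
  have hsign {c : ℤ} (hc : c = 0 ∨ c = -1) (j : ι) :
      let t := Function.update (fun j => m j / 2) k c
      (2 * t j + 1) * (2 * t j + 1) = 1 ∧ (2 * t j + 1) * m j = m j * m j := by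
    intro t
    by_cases hj : j = k
    · subst hj
      have ht : t j = c := Function.update_self ..
      rcases hc with rfl | rfl <;> simp [ht, hk]
    · have ht : t j = m j / 2 := Function.update_of_ne hj ..
      have : m j = -1 ∨ m j = 0 ∨ m j = 1 := by have := abs_le.1 (hm j); lia
      rcases this with h | h | h <;> simp [ht, h]
  have hsum (c : ℤ) := Finset.sum_update_of_mem (Finset.mem_univ k) (fun j => m j / 2) c
  rcases Int.even_or_odd (∑ j ∈ Finset.univ \ {k}, m j / 2) with hpar | hpar
  · exact ⟨_, by rw [hsum (-1)]; exact odd_neg_one.add_even hpar, hsign (Or.inr rfl)⟩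
  · exact ⟨_, by rw [hsum 0, zero_add]; exact hpar, hsign (Or.inl rfl)⟩

theorem inLambda.exists_forall_eq_intCast (hv : inLambda v) {i : Fin 8} {n : ℤ} (hi : v i = n) :
    ∃ m : Fin 8 → ℤ, ∀ j, v j = m j := by
  obtain ⟨m, k, -, hv⟩ := inLambda_iff.1 hv
  refine ⟨fun j => m j + (n - m i), fun j => ?_⟩
  push_cast
  linarith [hv i, hv j]

theorem abs_le_one_of_sum_mul_self_le_four {ι : Type*} [Fintype ι] {m : ι → ℤ}
    (hm : ∑ j, m j * m j ≤ 4) {i : ι} (hi : m i = 1) (j : ι) : |m j| ≤ 1 := by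
  by_cases hj : j = i
  · rw [hj, hi, abs_one]
  · have hle := (Finset.add_le_sum (f := fun j => m j * m j) (fun j _ => mul_self_nonneg (m j))
      (Finset.mem_univ j) (Finset.mem_univ i) hj).trans hm
    rw [hi] at hle
    rw [abs_le]
    constructor <;> nlinarith

theorem exists_eq_zero_of_sum_mul_self_lt_card {ι : Type*} [Fintype ι] {m : ι → ℤ}
    (hm : ∑ j, m j * m j < Fintype.card ι) : ∃ k, m k = 0 := by
  by_contra! hne
  have hle : ∑ _j : ι, (1 : ℤ) ≤ ∑ j, m j * m j :=
    Finset.sum_le_sum fun j _ => Int.add_one_le_iff.2 (mul_self_pos.2 (hne j))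
  simp only [Finset.sum_const, Finset.card_univ, nsmul_eq_mul, mul_one] at hle
  exact hm.not_ge hle

theorem inLambda_half_add_single {t : Fin 8 → ℤ} (ht : Odd (∑ j, t j)) (i : Fin 8) :
    inLambda ((fun j => (t j + 1 / 2 : ℝ)) + Pi.single i 1) := by
  refine inLambda_iff.2 ⟨t + Pi.single i 1, 1, ?_, fun j => ?_⟩
  · simpa [Finset.sum_add_distrib] using ht.add_one
  · by_cases hj : j = i
    · subst hj; simp; ring
    · simp [hj]

-- Here `v` is integral with four entries `±1`; `t + 1/2` is half a sign vector that agrees in sign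
-- with `v` wherever `v` does not vanish.
theorem IsNormFour.exists_half_sign_of_apply_eq_one (hv : IsNormFour v) {i : Fin 8}
    (hi : v i = 1) : ∃ t : Fin 8 → ℤ, Odd (∑ j, t j) ∧ t i = 0 ∧
      dot (fun j => t j + 1 / 2) (fun j => t j + 1 / 2) = 2 ∧ dot (fun j => t j + 1 / 2) v = 2 := by
  obtain ⟨m, hm⟩ := hv.1.exists_forall_eq_intCast (i := i) (n := 1) (by simpa using hi)
  have hmi : m i = 1 := by exact_mod_cast (hm i).symm.trans hi
  have hvv : ∑ j, v j * v j = 4 := hv.2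
  have hmm : ∑ j, m j * m j = 4 := by
    simp only [hm] at hvv
    exact_mod_cast hvv
  obtain ⟨k, hk⟩ := exists_eq_zero_of_sum_mul_self_lt_card (m := m) (by rw [hmm]; norm_num)
  obtain ⟨t, htodd, ht⟩ := exists_odd_sum_sign (abs_le_one_of_sum_mul_self_le_four hmm.le hmi) hk
  refine ⟨t, htodd, ?_, ?_, ?_⟩
  · have := (ht i).2
    rw [hmi] at this
    lia
  · have hsq (j) : (t j + 1 / 2 : ℝ) * (t j + 1 / 2) = 1 / 4 := by
      have : (2 * t j + 1 : ℝ) * (2 * t j + 1) = 1 := by exact_mod_cast (ht j).1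
      linarith
    simp only [dot, hsq, Finset.sum_const, Finset.card_univ, Fintype.card_fin]
    norm_num
  · have hmul (j) : (t j + 1 / 2 : ℝ) * v j = v j * v j / 2 := by
      have : (2 * t j + 1 : ℝ) * m j = m j * m j := by exact_mod_cast (ht j).2
      rw [hm]
      linarith
    simp only [dot, hmul, ← Finset.sum_div, hvv]
    norm_num

theorem IsNormFour.exists_dot_eq_three_of_apply_eq_one (hv : IsNormFour v) {i : Fin 8}
    (hi : v i = 1) : ∃ u, IsNormFour u ∧ u i = 3 / 2 ∧ dot u v = 3 := by
  obtain ⟨t, htodd, hti, hss, hsv⟩ := hv.exists_half_sign_of_apply_eq_one hi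
  set s : Fin 8 → ℝ := fun j => t j + 1 / 2 with hs
  have hsi : s i = 1 / 2 := by simp only [hs, hti, Int.cast_zero, zero_add]
  refine ⟨s + Pi.single i 1, ⟨inLambda_half_add_single htodd i, ?_⟩, ?_, ?_⟩
  · rw [dot_add, add_dot, dot_comm (Pi.single i 1), dot_single, dot_single, hss, Pi.add_apply, hsi,
      Pi.single_eq_same]
    norm_num
  · rw [Pi.add_apply, hsi, Pi.single_eq_same]
    norm_num
  · rw [add_dot, hsv, dot_comm, dot_single, hi]
    norm_num

theorem IsNormFour.exists_isWeyl_single_of_one_le_apply (hv : IsNormFour v) {i : Fin 8}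
    (hi : 1 ≤ v i) : ∃ w, IsWeyl w ∧ w (Pi.single i 2) = v := by
  have of_three_halves {u} (hu : IsNormFour u) (hui : u i = 3 / 2) :
      ∃ w, IsWeyl w ∧ w (Pi.single i 2) = u :=
    (isNormFour_single_two i).exists_isWeyl_of_dot_eq_three hu (by
      rw [dot_comm, dot_single, hui]; norm_num)
  have hi_le : v i ≤ 2 := by
    have hsq := Finset.single_le_sum (fun j _ => mul_self_nonneg (v j)) (Finset.mem_univ i)
    have hvv : ∑ j, v j * v j = 4 := hv.2
    nlinarith
  obtain ⟨n, hn⟩ := hv.1.exists_two_mul_apply_eq_intCast i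
  have hn_ge : 2 ≤ n := by
    have : (2 : ℝ) ≤ n := by linarith
    exact_mod_cast this
  have hn_le : n ≤ 4 := by
    have : (n : ℝ) ≤ 4 := by linarith
    exact_mod_cast this
  obtain rfl | rfl | rfl : n = 2 ∨ n = 3 ∨ n = 4 := by lia
  · obtain ⟨u, hu, hui, huv⟩ :=
      hv.exists_dot_eq_three_of_apply_eq_one (i := i) (by push_cast at hn; linarith)
    obtain ⟨w, hw, hwu⟩ := of_three_halves hu hui
    obtain ⟨w', hw', hwv⟩ := hu.exists_isWeyl_of_dot_eq_three hv huv
    exact ⟨w.trans w', hw.trans hw', by rw [LinearEquiv.trans_apply, hwu, hwv]⟩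
  · exact of_three_halves hv (by push_cast at hn; linarith)
  · have hdot : dot (Pi.single i 2) v = 4 := by
      rw [dot_comm, dot_single, mul_comm, hn]; norm_num
    have : Pi.single i 2 = v :=
      eq_of_dot_self_eq_dot ((isNormFour_single_two i).2.trans hdot.symm) (hv.2.trans hdot.symm)
    exact ⟨LinearEquiv.refl ℝ _, ⟨fun _ _ => rfl, Set.image_id _⟩, this⟩

theorem IsNormFour.exists_isWeyl_single (hv : IsNormFour v) :
    ∃ w i, IsWeyl w ∧ w (Pi.single i 2) = v := by
  obtain ⟨i, hi⟩ := hv.exists_one_le_abs_apply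
  rcases le_abs.1 hi with hi | hi
  · obtain ⟨w, hw, hwv⟩ := hv.exists_isWeyl_single_of_one_le_apply hi
    exact ⟨w, i, hw, hwv⟩
  · obtain ⟨w, hw, hwv⟩ := hv.neg.exists_isWeyl_single_of_one_le_apply (i := i) hi
    refine ⟨w.trans (LinearEquiv.neg ℝ), i, hw.trans isWeyl_neg, ?_⟩
    rw [LinearEquiv.trans_apply, hwv, LinearEquiv.neg_apply, neg_neg]

end NormFour

section ExposedRoots

variable {v x y : Fin 8 → ℝ}

/-- The roots on the face of the root polytope exposed by `v`; for `v·v = 4` the maximum of `x·v`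
over all roots `x` is 2. -/
def exposedRoots (v : Fin 8 → ℝ) : Set (Fin 8 → ℝ) := {x | isRoot x ∧ dot x v = 2}

/-- The family of pairs `{x, v - x}` of roots on the face exposed by `v`; for `v·v = 4` these are
the pairs of opposite vertices of a 7-crosspolytope with centre `v / 2`. -/
def antipodalPairs (v : Fin 8 → ℝ) : Set (Set (Fin 8 → ℝ)) :=
  (fun x => {x, v - x}) '' exposedRoots v

theorem IsNormFour.sub_mem_exposedRoots (hv : IsNormFour v) (hx : x ∈ exposedRoots v) :
    v - x ∈ exposedRoots v := by
  refine ⟨⟨hv.1.sub hx.1.1, ?_⟩, ?_⟩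
  · rw [dot_sub_self, hv.2, dot_comm v x, hx.2, hx.1.2]
    norm_num
  · rw [sub_dot, hv.2, hx.2]
    norm_num

theorem IsNormFour.sUnion_antipodalPairs (hv : IsNormFour v) :
    ⋃₀ antipodalPairs v = exposedRoots v := by
  refine Set.Subset.antisymm (Set.sUnion_subset ?_) fun x hx => ⟨_, ⟨x, hx, rfl⟩, by simp⟩
  rintro _ ⟨x, hx, rfl⟩
  exact Set.pair_subset hx (hv.sub_mem_exposedRoots hx)

theorem IsNormFour.two_smul_sub_dot_eq_zero (hv : IsNormFour v) (hx : x ∈ exposedRoots v) :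
    dot ((2 : ℝ) • x - v) v = 0 := by
  rw [sub_dot, smul_dot, hx.2, hv.2]
  norm_num

theorem IsNormFour.two_smul_sub_dot_two_smul_sub (hv : IsNormFour v) (hx : x ∈ exposedRoots v)
    (hy : y ∈ exposedRoots v) :
    dot ((2 : ℝ) • x - v) ((2 : ℝ) • y - v) = 4 * dot x y - 4 := by
  rw [dot_sub, hv.two_smul_sub_dot_eq_zero hx, sub_dot, dot_smul, dot_smul, smul_dot, dot_comm v y,
    hy.2]
  ring

theorem mem_exposedRoots_add (hx : isRoot x) (hxy : dot x y = 0) : x ∈ exposedRoots (x + y) :=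
  ⟨hx, by rw [dot_add, hx.2, hxy, add_zero]⟩

theorem IsNormFour.eq_add_of_mem_exposedRoots (hv : IsNormFour v) (hx : x ∈ exposedRoots v)
    (hy : y ∈ exposedRoots v) (hxy : dot x y = 0) : v = x + y := by
  have hdot : dot v (x + y) = 4 := by
    rw [dot_comm, add_dot, hx.2, hy.2]
    norm_num
  exact eq_of_dot_self_eq_dot (hv.2.trans hdot.symm)
    ((hx.1.isNormFour_add hy.1 hxy).2.trans hdot.symm)

theorem exposedRoots_add (hx : isRoot x) (hy : isRoot y) (hxy : dot x y = 0) :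
    exposedRoots (x + y) =
      insert x (insert y {e | isRoot e ∧ dot e x = 1 ∧ dot e y = 1}) := by
  ext e
  constructor
  · rintro ⟨he, hsum⟩
    by_cases hex : e = x
    · exact Or.inl hex
    by_cases hey : e = y
    · exact Or.inr (Or.inl hey)
    have h1 := he.dot_le_one hx hex
    have h2 := he.dot_le_one hy hey
    rw [dot_add] at hsum
    exact Or.inr (Or.inr ⟨he, by linarith, by linarith⟩)
  · rintro (rfl | rfl | ⟨he, hex, hey⟩)
    · exact mem_exposedRoots_add hx hxy
    · rw [add_comm]
      exact mem_exposedRoots_add hy (by rwa [dot_comm])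
    · exact ⟨he, by rw [dot_add, hex, hey]; norm_num⟩

end ExposedRoots

section HalfCross

variable {v y : Fin 8 → ℝ} {x : Fin 7 → Fin 8 → ℝ}

/-- Seven roots `x i` on the face exposed by `v`, no two of them opposite: together with the
`v - x i` they are the vertices of a 7-crosspolytope. -/
structure IsHalfCross (v : Fin 8 → ℝ) (x : Fin 7 → Fin 8 → ℝ) : Prop where
  mem_exposedRoots : ∀ i, x i ∈ exposedRoots v
  dot_eq_one : ∀ i j, i ≠ j → dot (x i) (x j) = 1

theorem IsHalfCross.map {w : (Fin 8 → ℝ) ≃ₗ[ℝ] (Fin 8 → ℝ)} (hx : IsHalfCross v x)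
    (hw : IsWeyl w) : IsHalfCross (w v) fun i => w (x i) where
  mem_exposedRoots i :=
    ⟨hw.map_root (hx.mem_exposedRoots i).1, (hw.1 _ _).trans (hx.mem_exposedRoots i).2⟩
  dot_eq_one i j hij := (hw.1 _ _).trans (hx.dot_eq_one i j hij)

theorem isHalfCross_single_two (i : Fin 8) :
    IsHalfCross (Pi.single i 2) fun j => Pi.single i 1 + Pi.single (i.succAbove j) 1 where
  mem_exposedRoots j := by
    refine ⟨isRoot_single_add_single (Fin.ne_succAbove i j), ?_⟩
    norm_num [dot_single, Fin.ne_succAbove]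
  dot_eq_one j l hjl := by
    simp [dot_add, dot_single, Fin.succAbove_ne, Fin.ne_succAbove, hjl.symm]

theorem IsNormFour.exists_isHalfCross (hv : IsNormFour v) : ∃ x, IsHalfCross v x := by
  obtain ⟨w, i, hw, rfl⟩ := hv.exists_isWeyl_single
  exact ⟨_, (isHalfCross_single_two i).map hw⟩

theorem IsHalfCross.dot_sub_same (hx : IsHalfCross v x) (i : Fin 7) :
    dot (x i) (v - x i) = 0 := by
  rw [dot_sub, (hx.mem_exposedRoots i).2, (hx.mem_exposedRoots i).1.2, sub_self]

theorem IsHalfCross.dot_sub_of_ne (hx : IsHalfCross v x) {i j : Fin 7} (hij : i ≠ j) :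
    dot (x i) (v - x j) = 1 := by
  rw [dot_sub, (hx.mem_exposedRoots i).2, hx.dot_eq_one i j hij]
  norm_num

theorem IsHalfCross.sub_dot_sub_of_ne (hx : IsHalfCross v x) (hv : IsNormFour v) {i j : Fin 7}
    (hij : i ≠ j) : dot (v - x i) (v - x j) = 1 := by
  rw [sub_dot, hx.dot_sub_of_ne hij, dot_sub, hv.2, dot_comm, (hx.mem_exposedRoots j).2]
  norm_num

-- Otherwise `y·(x i) = 1` for all `i`, and `2 y - v` would be orthogonal to the eight pairwise
-- orthogonal vectors `v` and `2 x i - v`.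
theorem IsHalfCross.exists_eq_or_eq_sub (hx : IsHalfCross v x) (hv : IsNormFour v)
    (hy : y ∈ exposedRoots v) : ∃ i, y = x i ∨ y = v - x i := by
  by_contra! hne
  have hyx (i) : dot y (x i) = 1 := by
    have h1 := hy.1.dot_le_one (hx.mem_exposedRoots i).1 (hne i).1
    have h2 := hy.1.dot_le_one (hv.sub_mem_exposedRoots (hx.mem_exposedRoots i)).1 (hne i).2
    rw [dot_sub, hy.2] at h2
    linarith
  have hself {z} (hz : z ∈ exposedRoots v) : dot ((2 : ℝ) • z - v) ((2 : ℝ) • z - v) = 4 := by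
    rw [hv.two_smul_sub_dot_two_smul_sub hz hz, hz.1.2]
    norm_num
  have horth {z z'} (hz : z ∈ exposedRoots v) (hz' : z' ∈ exposedRoots v) (hzz' : dot z z' = 1) :
      dot ((2 : ℝ) • z - v) ((2 : ℝ) • z' - v) = 0 := by
    rw [hv.two_smul_sub_dot_two_smul_sub hz hz', hzz']
    norm_num
  have hne_zero {z} (hz : dot z z = 4) : z ≠ 0 := by
    rintro rfl
    rw [dot_eq_dotProduct, zero_dotProduct] at hz
    norm_num at hz
  have hmem := hx.mem_exposedRoots
  refine hne_zero (hself hy) (eq_zero_of_forall_orthogonal_dotProduct_eq_zero (ι := Option (Fin 7))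
    (by simp) (b := fun o => o.elim v fun i => (2 : ℝ) • x i - v) ?_ ?_ ?_)
  · rintro (_ | i)
    exacts [hne_zero hv.2, hne_zero (hself (hmem i))]
  · rintro (_ | i) (_ | j) hij
    · exact absurd rfl hij
    · exact (dot_comm _ _).trans (hv.two_smul_sub_dot_eq_zero (hmem j))
    · exact hv.two_smul_sub_dot_eq_zero (hmem i)
    · exact horth (hmem i) (hmem j) (hx.dot_eq_one i j (mt (congrArg some) hij))
  · rintro (_ | i)
    exacts [hv.two_smul_sub_dot_eq_zero hy, horth hy (hmem i) (hyx i)]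

theorem IsHalfCross.range_sumElim (hx : IsHalfCross v x) (hv : IsNormFour v) :
    Set.range (Sum.elim x fun i => v - x i) = exposedRoots v := by
  refine Set.Subset.antisymm (Set.range_subset_iff.2 ?_) fun y hy => ?_
  · rintro (i | i)
    · exact hx.mem_exposedRoots i
    · exact hv.sub_mem_exposedRoots (hx.mem_exposedRoots i)
  · obtain ⟨i, rfl | rfl⟩ := hx.exists_eq_or_eq_sub hv hy
    · exact ⟨Sum.inl i, rfl⟩
    · exact ⟨Sum.inr i, rfl⟩

theorem IsHalfCross.injective (hx : IsHalfCross v x) : Function.Injective x := by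
  intro i j hij
  by_contra hne
  have := hx.dot_eq_one i j hne
  rw [hij, (hx.mem_exposedRoots j).1.2] at this
  norm_num at this

theorem IsHalfCross.ne_sub (hx : IsHalfCross v x) (i j : Fin 7) : x i ≠ v - x j := by
  intro heq
  have hself := (hx.mem_exposedRoots i).1.2
  nth_rw 2 [heq] at hself
  rcases eq_or_ne i j with rfl | hij
  · rw [hx.dot_sub_same] at hself
    norm_num at hself
  · rw [hx.dot_sub_of_ne hij] at hself
    norm_num at hself

theorem IsNormFour.ncard_exposedRoots (hv : IsNormFour v) : (exposedRoots v).ncard = 14 := by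
  obtain ⟨x, hx⟩ := hv.exists_isHalfCross
  have hinj : Function.Injective (Sum.elim x fun i => v - x i) :=
    hx.injective.sumElim (sub_right_injective.comp hx.injective) hx.ne_sub
  rw [← hx.range_sumElim hv, Set.ncard_range_of_injective hinj]
  simp

theorem IsHalfCross.range_pair (hx : IsHalfCross v x) (hv : IsNormFour v) :
    Set.range (fun i => ({x i, v - x i} : Set (Fin 8 → ℝ))) = antipodalPairs v := by
  refine Set.Subset.antisymm
    (Set.range_subset_iff.2 fun i => ⟨x i, hx.mem_exposedRoots i, rfl⟩) ?_
  rintro _ ⟨y, hy, rfl⟩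
  obtain ⟨i, rfl | rfl⟩ := hx.exists_eq_or_eq_sub hv hy
  · exact ⟨i, rfl⟩
  · exact ⟨i, by simp only [sub_sub_cancel, Set.pair_comm]⟩

theorem IsNormFour.isCross_antipodalPairs (hv : IsNormFour v) : IsCross (antipodalPairs v) := by
  obtain ⟨x, hx⟩ := hv.exists_isHalfCross
  exact ⟨x, fun i => v - x i, (hx.range_pair hv).symm,
    fun i => ⟨(hx.mem_exposedRoots i).1, (hv.sub_mem_exposedRoots (hx.mem_exposedRoots i)).1⟩,
    hx.dot_sub_same,
    fun i j hij => ⟨hx.dot_eq_one i j hij, hx.dot_sub_of_ne hij, hx.sub_dot_sub_of_ne hv hij⟩⟩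

end HalfCross

section Cross

variable {P : Set (Set (Fin 8 → ℝ))} {e1 e2 : Fin 8 → ℝ}

theorem IsCross.exists_eq_antipodalPairs (hP : IsCross P) :
    ∃ v, IsNormFour v ∧ P = antipodalPairs v := by
  obtain ⟨e, f, rfl, hroot, horth, hone⟩ := hP
  have hv (i) : IsNormFour (e i + f i) := (hroot i).1.isNormFour_add (hroot i).2 (horth i)
  have hsum (i) : e i + f i = e 0 + f 0 := by
    by_cases hi : i = 0
    · rw [hi]
    have hdot : dot (e i + f i) (e 0 + f 0) = 4 := by
      rw [add_dot, dot_add, dot_add, (hone i 0 hi).1, (hone i 0 hi).2.1, (hone i 0 hi).2.2,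
        dot_comm, (hone 0 i (Ne.symm hi)).2.1]
      norm_num
    exact eq_of_dot_self_eq_dot ((hv i).2.trans hdot.symm) ((hv 0).2.trans hdot.symm)
  have hf : f = fun i => e 0 + f 0 - e i := funext fun i => by rw [← hsum i, add_sub_cancel_left]
  have he : IsHalfCross (e 0 + f 0) e :=
    ⟨fun i => hsum i ▸ mem_exposedRoots_add (hroot i).1 (horth i), fun i j hij => (hone i j hij).1⟩
  refine ⟨e 0 + f 0, hv 0, ?_⟩
  rw [← he.range_pair (hv 0)]
  nth_rw 1 [hf]

theorem IsCross.eq_antipodalPairs_add (hP : IsCross P) (h1 : e1 ∈ ⋃₀ P) (h2 : e2 ∈ ⋃₀ P)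
    (h : dot e1 e2 = 0) : P = antipodalPairs (e1 + e2) := by
  obtain ⟨v, hv, rfl⟩ := hP.exists_eq_antipodalPairs
  rw [hv.sUnion_antipodalPairs] at h1 h2
  rw [hv.eq_add_of_mem_exposedRoots h1 h2 h]

theorem ncard_setOf_dot_eq_one (h1 : isRoot e1) (h2 : isRoot e2) (h : dot e1 e2 = 0) :
    {e | isRoot e ∧ dot e e1 = 1 ∧ dot e e2 = 1}.ncard = 12 := by
  set S := {e | isRoot e ∧ dot e e1 = 1 ∧ dot e e2 = 1}
  have hcard : (insert e1 (insert e2 S)).ncard = 14 := by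
    rw [← exposedRoots_add h1 h2 h, (h1.isNormFour_add h2 h).ncard_exposedRoots]
  have hfin : (insert e2 S).Finite :=
    (Set.finite_of_ncard_ne_zero (by rw [hcard]; norm_num)).subset (Set.subset_insert _ _)
  have h1_notMem : e1 ∉ insert e2 S := by
    rintro (rfl | ⟨-, h11, -⟩)
    · linarith [h1.2]
    · linarith [h1.2]
  have h2_notMem : e2 ∉ S := fun ⟨_, _, h22⟩ => by linarith [h2.2]
  rw [Set.ncard_insert_of_notMem h1_notMem hfin,
    Set.ncard_insert_of_notMem h2_notMem (hfin.subset (Set.subset_insert _ _))] at hcard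
  lia

end Cross

/-- For orthogonal roots `e₁, e₂` there are exactly 12 roots `e` with
`e·e₁ = e·e₂ = 1`; these 12 roots together with `e₁, e₂` form the 14 roots of an
element of `C` one of whose pairs is `{e₁,e₂}`, and this element of `C` is unique
among those containing both `e₁` and `e₂` among their roots. -/
theorem stmt_7 (e1 e2 : Fin 8 → ℝ) (h1 : isRoot e1) (h2 : isRoot e2)
    (h : dot e1 e2 = 0) :
    {e | isRoot e ∧ dot e e1 = 1 ∧ dot e e2 = 1}.ncard = 12 ∧
    (∃ P : Set (Set (Fin 8 → ℝ)), IsCross P ∧ ({e1, e2} : Set (Fin 8 → ℝ)) ∈ P) ∧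
    (∀ P : Set (Set (Fin 8 → ℝ)), IsCross P → ({e1, e2} : Set (Fin 8 → ℝ)) ∈ P →
      ⋃₀ P = insert e1 (insert e2 {e | isRoot e ∧ dot e e1 = 1 ∧ dot e e2 = 1})) ∧
    (∀ P Q : Set (Set (Fin 8 → ℝ)), IsCross P → IsCross Q →
      e1 ∈ ⋃₀ P → e2 ∈ ⋃₀ P → e1 ∈ ⋃₀ Q → e2 ∈ ⋃₀ Q → P = Q) := by
  have hv := h1.isNormFour_add h2 h
  refine ⟨ncard_setOf_dot_eq_one h1 h2 h,
    ⟨antipodalPairs (e1 + e2), hv.isCross_antipodalPairs, e1, mem_exposedRoots_add h1 h, by simp⟩,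
    fun P hP hmem => ?_, fun P Q hP hQ hP1 hP2 hQ1 hQ2 => ?_⟩
  · rw [hP.eq_antipodalPairs_add ⟨_, hmem, by simp⟩ ⟨_, hmem, by simp⟩ h,
      hv.sUnion_antipodalPairs, exposedRoots_add h1 h2 h]
  · rw [hP.eq_antipodalPairs_add hP1 hP2 h, hQ.eq_antipodalPairs_add hQ1 hQ2 h]
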